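/- Every reflection factorization of a Coxeter element of G4 of length at least three has, in its Hurwitz orbit, a reflection factorization with two consecutive equal entries. -/

import Mathlib

noncomputable section

open Matrix Complex

/-- The `i`-th Hurwitz move on length-`k` tuples of group elements. -/
def IsHurwitzMove {G : Type*} [Group G] {k : ℕ} (t t' : Fin k → G) : Prop :=
  ∃ i : ℕ, ∃ h : i + 1 < k,
    t' ⟨i, Nat.lt_of_succ_lt h⟩ = t ⟨i + 1, h⟩ ∧
    t' ⟨i + 1, h⟩ = (t ⟨i + 1, h⟩)⁻¹ * t ⟨i, Nat.lt_of_succ_lt h⟩ * t ⟨i + 1, h⟩ ∧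
    ∀ j : Fin k, (j : ℕ) ≠ i → (j : ℕ) ≠ i + 1 → t' j = t j

/-- Two tuples lie in the same Hurwitz orbit. -/
def SameHurwitzOrbit {G : Type*} [Group G] {k : ℕ} (t t' : Fin k → G) : Prop :=
  Relation.EqvGen IsHurwitzMove t t'

/-- A group element `r` appears (as an entry) in the Hurwitz orbit of the tuple `t`. -/
def Appears {G : Type*} [Group G] {k : ℕ} (r : G) (t : Fin k → G) : Prop :=
  ∃ s : Fin k → G, SameHurwitzOrbit t s ∧ ∃ j, s j = r

/-- A tuple has two consecutive equal entries. -/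
def HasConsecutiveEqualPair {G : Type*} [Group G] {k : ℕ} (t : Fin k → G) : Prop :=
  ∃ i : ℕ, ∃ h : i + 1 < k, t ⟨i, Nat.lt_of_succ_lt h⟩ = t ⟨i + 1, h⟩

/-- Replace the `p`-th entry of a tuple by two consecutive copies of its square. -/
def doubleAt {G : Type*} [Group G] {m : ℕ} (t : Fin m → G) (p : Fin m) : Fin (m + 1) → G :=
  fun j =>
    if h1 : (j : ℕ) < (p : ℕ) then t ⟨j, h1.trans p.isLt⟩
    else if h2 : (j : ℕ) ≤ (p : ℕ) + 1 then (t p) ^ 2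
    else t ⟨(j : ℕ) - 1, by have := j.isLt; omega⟩

/-- `ω = e^(2πi/3)`. -/
def ω : ℂ := Complex.exp (2 * Real.pi * Complex.I / 3)

def AMat : Matrix (Fin 2) (Fin 2) ℂ := !![1, 0; 0, ω]

def BMat : Matrix (Fin 2) (Fin 2) ℂ :=
  !![(ω - ω ^ 2) / 3, ω ^ 2; (-2 * ω ^ 2) / 3, (-ω - 2 * ω ^ 2) / 3]

/-- The complex reflection group G₄ as the subgroup of GL(2,ℂ) generated by `AMat`, `BMat`. -/
def G4 : Subgroup (GL (Fin 2) ℂ) :=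
  Subgroup.closure {g : GL (Fin 2) ℂ |
    (g : Matrix (Fin 2) (Fin 2) ℂ) = AMat ∨ (g : Matrix (Fin 2) (Fin 2) ℂ) = BMat}

/-- The matrix underlying an element of G₄. -/
def mat (t : G4) : Matrix (Fin 2) (Fin 2) ℂ := ((t : GL (Fin 2) ℂ) : Matrix (Fin 2) (Fin 2) ℂ)

/-- A reflection in G₄: a non-identity element with eigenvalue 1. -/
def IsReflection (t : G4) : Prop := t ≠ 1 ∧ (mat t - 1).det = 0

/-- The conjugacy class R₁ of reflections of determinant ω. -/
def R1 : Set G4 := {t | IsReflection t ∧ (mat t).det = ω}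

/-- The conjugacy class R₂ of reflections of determinant ω². -/
def R2 : Set G4 := {t | IsReflection t ∧ (mat t).det = ω ^ 2}

/-- A Coxeter element of G₄: an element with a primitive 6th root of unity as eigenvalue. -/
def IsCoxeter (c : G4) : Prop :=
  ∃ ζ : ℂ, IsPrimitiveRoot ζ 6 ∧ (mat c - ζ • (1 : Matrix (Fin 2) (Fin 2) ℂ)).det = 0

/-- The relators of G₅: a³, b³, abab(baba)⁻¹. -/
def g5Rels : Set (FreeGroup (Fin 2)) :=
  {FreeGroup.of 0 ^ 3, FreeGroup.of 1 ^ 3,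
    FreeGroup.of 0 * FreeGroup.of 1 * FreeGroup.of 0 * FreeGroup.of 1 *
      (FreeGroup.of 1 * FreeGroup.of 0 * FreeGroup.of 1 * FreeGroup.of 0)⁻¹}

/-- The complex reflection group G₅, by its presentation ⟨a,b | a³ = b³ = 1, abab = baba⟩. -/
abbrev G5 := PresentedGroup g5Rels

def ga : G5 := PresentedGroup.of 0
def gb : G5 := PresentedGroup.of 1

/-- The conjugacy class of `a` in G₅. -/
def S1 : Set G5 := {t | IsConj ga t}
/-- The conjugacy class of `b` in G₅. -/
def S2 : Set G5 := {t | IsConj gb t}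
/-- The conjugacy class of `a²` in G₅. -/
def S3 : Set G5 := {t | IsConj (ga ^ 2) t}
/-- The conjugacy class of `b²` in G₅. -/
def S4 : Set G5 := {t | IsConj (gb ^ 2) t}

/-- A reflection in G₅: a conjugate of a, b, a², or b². -/
def IsReflection5 (t : G5) : Prop := t ∈ S1 ∨ t ∈ S2 ∨ t ∈ S3 ∨ t ∈ S4

/-- A Coxeter element of G₅: an element of order 12. -/
def IsCoxeter5 (c : G5) : Prop := orderOf c = 12

/-!
The four reflections of determinant `ω` satisfy the braid relation, and for distinct `a`, `b` among
them the other two are `b⁻¹ * a * b` and the element `v` with `a * b * v = -1`. So the orbit of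
`(a, b)` contains a pair `(x, c)` for every such reflection `c` except `v`, and `(a, b, c)` can be
moved to `(x, c, c)` unless its product is `-1`. The remaining reflections are inverses of these
four. Hurwitz moves bring the reflections of determinant `ω` to the front, and exchanging `ω` and
`ω ^ 2` we may assume that they are at least as many as the others; the first three or four entries
then decide the matter: an orbit without a consecutive equal pair has product `1`, `-1` or a
reflection, whereas a Coxeter element is none of these.
-/

section Hurwitz

variable {G : Type*} [Group G]

/-- The Hurwitz move on factorizations written as lists, so that factorizations can be split and
concatenated. -/
inductive HurwitzStep : List G → List G → Prop
  | intro (p : List G) (a b : G) (r : List G) :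
      HurwitzStep (p ++ a :: b :: r) (p ++ b :: (b⁻¹ * a * b) :: r)

/-- The list version of `SameHurwitzOrbit`. -/
def HurwitzEquiv : List G → List G → Prop :=
  Relation.EqvGen HurwitzStep

local infix:50 "∼ₕ" => HurwitzEquiv

/-- Some list in the Hurwitz orbit of `l` has two consecutive equal entries. -/
def OrbitHasPair (l : List G) : Prop :=
  ∃ (p : List G) (x : G) (r : List G), l ∼ₕ p ++ x :: x :: r

namespace HurwitzEquiv

variable {l m n : List G}

theorem refl (l : List G) : l ∼ₕ l := Relation.EqvGen.refl l

theorem symm (h : l ∼ₕ m) : m ∼ₕ l := Relation.EqvGen.symm _ _ h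

theorem trans (h : l ∼ₕ m) (h' : m ∼ₕ n) : l ∼ₕ n := Relation.EqvGen.trans _ _ _ h h'

instance : Trans (HurwitzEquiv (G := G)) HurwitzEquiv HurwitzEquiv := ⟨trans⟩

theorem cons_cons (a b : G) (l : List G) : a :: b :: l ∼ₕ b :: (b⁻¹ * a * b) :: l :=
  .rel _ _ (.intro [] a b l)

theorem cons_cons_conj (a b : G) (l : List G) : a :: b :: l ∼ₕ (a * b * a⁻¹) :: a :: l := by
  simpa [mul_assoc] using (cons_cons (a * b * a⁻¹) a l).symm

theorem append_append (h : l ∼ₕ m) (p r : List G) : p ++ l ++ r ∼ₕ p ++ m ++ r := by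
  induction h with
  | rel _ _ hstep =>
    obtain ⟨q, a, b, s⟩ := hstep
    refine .rel _ _ ?_
    simpa using HurwitzStep.intro (p ++ q) a b (s ++ r)
  | refl l => exact refl _
  | symm _ _ _ ih => exact ih.symm
  | trans _ _ _ _ _ ih ih' => exact ih.trans ih'

theorem cons (h : l ∼ₕ m) (x : G) : x :: l ∼ₕ x :: m := by
  simpa using h.append_append [x] []

theorem append_right (h : l ∼ₕ m) (r : List G) : l ++ r ∼ₕ m ++ r :=
  h.append_append [] r

theorem length_eq (h : l ∼ₕ m) : l.length = m.length := by
  induction h with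
  | rel _ _ hstep => obtain ⟨p, a, b, r⟩ := hstep; simp
  | refl => rfl
  | symm _ _ _ ih => exact ih.symm
  | trans _ _ _ _ _ ih ih' => exact ih.trans ih'

theorem prod_eq (h : l ∼ₕ m) : l.prod = m.prod := by
  induction h with
  | rel _ _ hstep => obtain ⟨p, a, b, r⟩ := hstep; simp [mul_assoc]
  | refl => rfl
  | symm _ _ _ ih => exact ih.symm
  | trans _ _ _ _ _ ih ih' => exact ih.trans ih'

theorem cons_append_singleton (x : G) (l : List G) : x :: l ∼ₕ l ++ [l.prod⁻¹ * x * l.prod] := by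
  induction l generalizing x with
  | nil => simpa using refl [x]
  | cons y l ih =>
    calc x :: y :: l
      _ ∼ₕ y :: (y⁻¹ * x * y) :: l := cons_cons x y l
      _ ∼ₕ y :: (l ++ [l.prod⁻¹ * (y⁻¹ * x * y) * l.prod]) := (ih _).cons y
      _ = y :: l ++ [(y :: l).prod⁻¹ * x * (y :: l).prod] := by simp [mul_assoc]

theorem append_comm (l m : List G) :
    l ++ m ∼ₕ m ++ l.map (fun x => m.prod⁻¹ * x * m.prod) := by
  induction l with
  | nil => simpa using refl m
  | cons x l ih =>
    calc x :: l ++ m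
      _ ∼ₕ x :: (m ++ l.map (fun x => m.prod⁻¹ * x * m.prod)) := ih.cons x
      _ ∼ₕ m ++ [m.prod⁻¹ * x * m.prod] ++ l.map (fun x => m.prod⁻¹ * x * m.prod) :=
        (cons_append_singleton x m).append_right _
      _ = m ++ (x :: l).map (fun x => m.prod⁻¹ * x * m.prod) := by simp

theorem cons_inv_pair_conj (x s : G) :
    [x, s, s⁻¹] ∼ₕ [x, x⁻¹ * s * x, (x⁻¹ * s * x)⁻¹] := by
  calc [x, s, s⁻¹]
    _ ∼ₕ [s, s⁻¹, x] := by simpa using append_comm [x] [s, s⁻¹]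
    _ ∼ₕ [x, x⁻¹ * s * x, (x⁻¹ * s * x)⁻¹] := by
      simpa [mul_assoc] using append_comm [s, s⁻¹] [x]

theorem exists_append_of_conj_mem {S T : Set G} (hT : ∀ g, ∀ x ∈ T, g⁻¹ * x * g ∈ T)
    (l : List G) (hl : ∀ x ∈ l, x ∈ S ∨ x ∈ T) :
    ∃ m n : List G, (∀ x ∈ m, x ∈ S) ∧ (∀ x ∈ n, x ∈ T) ∧ l ∼ₕ m ++ n := by
  induction l with
  | nil => exact ⟨[], [], by simp, by simp, refl []⟩
  | cons x l ih =>
    rw [List.forall_mem_cons] at hl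
    obtain ⟨m, n, hm, hn, hlmn⟩ := ih hl.2
    rcases hl.1 with hx | hx
    · exact ⟨x :: m, n, List.forall_mem_cons.2 ⟨hx, hm⟩, hn, hlmn.cons x⟩
    · refine ⟨m, m.prod⁻¹ * x * m.prod :: n, hm, List.forall_mem_cons.2 ⟨hT _ _ hx, hn⟩, ?_⟩
      calc x :: l
        _ ∼ₕ x :: m ++ n := hlmn.cons x
        _ ∼ₕ m ++ [m.prod⁻¹ * x * m.prod] ++ n := (cons_append_singleton x m).append_right n
        _ = m ++ m.prod⁻¹ * x * m.prod :: n := by simp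

end HurwitzEquiv

namespace OrbitHasPair

variable {l m : List G}

theorem of_cons_cons (x : G) (l : List G) : OrbitHasPair (x :: x :: l) :=
  ⟨[], x, l, .refl _⟩

theorem of_equiv (h : l ∼ₕ m) (hm : OrbitHasPair m) : OrbitHasPair l := by
  obtain ⟨p, x, r, hpair⟩ := hm
  exact ⟨p, x, r, h.trans hpair⟩

theorem of_isInfix (h : l <:+: m) (hl : OrbitHasPair l) : OrbitHasPair m := by
  obtain ⟨p, r, rfl⟩ := h
  obtain ⟨q, x, s, hpair⟩ := hl
  exact ⟨p ++ q, x, s ++ r, by simpa using hpair.append_append p r⟩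

theorem cons (x : G) (hl : OrbitHasPair l) : OrbitHasPair (x :: l) :=
  hl.of_isInfix (List.suffix_cons x l).isInfix

theorem append_right (hl : OrbitHasPair l) (r : List G) : OrbitHasPair (l ++ r) :=
  hl.of_isInfix (List.prefix_append l r).isInfix

end OrbitHasPair

theorem HurwitzStep.isHurwitzMove {l m : List G} {k : ℕ} (h : HurwitzStep l m)
    (hl : l.length = k) (hm : m.length = k) :
    IsHurwitzMove (fun i : Fin k => l[i]) (fun i : Fin k => m[i]) := by
  obtain ⟨p, a, b, r⟩ := h
  simp only [List.length_append, List.length_cons] at hl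
  refine ⟨p.length, by omega, by simp, by simp, fun j hj hj' => ?_⟩
  simp only [Fin.getElem_fin, List.getElem_append]
  split_ifs with hlt
  · rfl
  · obtain ⟨i, hi⟩ : ∃ i, (j : ℕ) - p.length = i + 2 := ⟨j - p.length - 2, by omega⟩
    simp [hi]

theorem HurwitzEquiv.sameHurwitzOrbit {l m : List G} {k : ℕ} (h : l ∼ₕ m)
    (hl : l.length = k) (hm : m.length = k) :
    SameHurwitzOrbit (fun i : Fin k => l[i]) (fun i : Fin k => m[i]) := by
  induction h with
  | rel _ _ hstep => exact .rel _ _ (hstep.isHurwitzMove hl hm)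
  | refl => exact .refl _
  | symm _ _ _ ih => exact .symm _ _ (ih hm hl)
  | trans _ n _ hln _ ih ih' =>
    have hn : n.length = k := (length_eq hln).symm.trans hl
    exact .trans _ _ _ (ih hl hn) (ih' hn hm)

theorem OrbitHasPair.exists_sameHurwitzOrbit {k : ℕ} {t : Fin k → G}
    (h : OrbitHasPair (List.ofFn t)) :
    ∃ s : Fin k → G, SameHurwitzOrbit t s ∧ HasConsecutiveEqualPair s := by
  obtain ⟨p, x, r, hpair⟩ := h
  have hlen : (p ++ x :: x :: r).length = k := by
    rw [← hpair.length_eq, List.length_ofFn]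
  refine ⟨fun i => (p ++ x :: x :: r)[i], ?_, p.length, ?_, ?_⟩
  · simpa using hpair.sameHurwitzOrbit List.length_ofFn hlen
  · simp only [List.length_append, List.length_cons] at hlen
    omega
  · simp

/-- A conjugation-invariant set `T` whose conjugation structure is that of the vertex rotations of
a tetrahedron: given distinct `a, b ∈ T`, the elements of `T` are `a`, `b`, `b⁻¹ * a * b` and a
fourth one, for which `a * b * v` is the fixed central element `z`. -/
structure IsTetrahedral (T : Set G) (z : G) : Prop where
  conj_mem : ∀ g, ∀ a ∈ T, g⁻¹ * a * g ∈ T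
  braid : ∀ a ∈ T, ∀ b ∈ T, a * b * a = b * a * b
  commute : ∀ a ∈ T, Commute z a
  eq_or_mul_mul_eq : ∀ a ∈ T, ∀ b ∈ T, ∀ v ∈ T, a ≠ b →
    v = a ∨ v = b ∨ v = b⁻¹ * a * b ∨ a * b * v = z

namespace IsTetrahedral

variable {T : Set G} {z a b c d s t : G}

theorem inv_conj_mem (hT : IsTetrahedral T z) (g : G) (hs : s⁻¹ ∈ T) : (g⁻¹ * s * g)⁻¹ ∈ T := by
  simpa [mul_assoc] using hT.conj_mem g _ hs

theorem inv (hT : IsTetrahedral T z) : IsTetrahedral {x | x⁻¹ ∈ T} z⁻¹ where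
  conj_mem g _ ha := hT.inv_conj_mem g ha
  braid a ha b hb := by
    simpa [mul_assoc] using congrArg (·⁻¹) (hT.braid _ ha _ hb)
  commute a ha := by
    simpa using (hT.commute _ ha).inv_inv
  eq_or_mul_mul_eq a ha b hb v hv hab := by
    have hbraid : a * b * a = b * a * b := by
      simpa [mul_assoc] using congrArg (·⁻¹) (hT.braid _ ha _ hb)
    rcases hT.eq_or_mul_mul_eq _ hb _ ha _ hv (by simpa using hab.symm) with h | h | h | h
    · exact .inr (.inl (inv_injective h))
    · exact .inl (inv_injective h)
    · refine .inr (.inr (.inl ?_))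
      have hv : v = a * b * a⁻¹ := by simpa [mul_assoc] using congrArg (·⁻¹) h
      rw [hv, mul_inv_eq_iff_eq_mul, mul_assoc, mul_assoc, eq_inv_mul_iff_mul_eq, ← mul_assoc,
        ← mul_assoc, hbraid]
    · refine .inr (.inr (.inr ?_))
      have hvab : v * (a * b) = z⁻¹ := by simp [← h, mul_assoc]
      have hcomm : Commute z⁻¹ v := by simpa using (hT.commute _ hv).inv_inv
      rw [← mul_right_inj v, ← mul_assoc, hvab, hcomm.eq]

theorem exists_equiv_or_mul_mul_eq (hT : IsTetrahedral T z) (ha : a ∈ T) (hb : b ∈ T) (hc : c ∈ T)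
    (hab : a ≠ b) : (∃ x ∈ T, [a, b] ∼ₕ [x, c]) ∨ a * b * c = z := by
  rcases hT.eq_or_mul_mul_eq a ha b hb c hc hab with rfl | rfl | rfl | h
  · exact .inl ⟨_, by simpa using hT.conj_mem c⁻¹ b hb, .cons_cons_conj c b []⟩
  · exact .inl ⟨a, ha, .refl _⟩
  · exact .inl ⟨b, hb, .cons_cons a b []⟩
  · exact .inr h

theorem orbitHasPair_three_or (hT : IsTetrahedral T z) (ha : a ∈ T) (hb : b ∈ T) (hc : c ∈ T) :
    OrbitHasPair [a, b, c] ∨ a * b * c = z := by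
  rcases eq_or_ne a b with rfl | hab
  · exact .inl (.of_cons_cons a [c])
  · refine (hT.exists_equiv_or_mul_mul_eq ha hb hc hab).imp_left ?_
    rintro ⟨x, -, hx⟩
    exact .of_equiv (hx.append_right [c]) (.cons x (.of_cons_cons c []))

theorem orbitHasPair_four (hT : IsTetrahedral T z) (ha : a ∈ T) (hb : b ∈ T) (hc : c ∈ T)
    (hd : d ∈ T) : OrbitHasPair [a, b, c, d] := by
  rcases hT.orbitHasPair_three_or ha hb hc with habc | habc
  · exact habc.append_right [d]
  rcases hT.orbitHasPair_three_or hb hc hd with hbcd | hbcd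
  · exact hbcd.cons a
  have hbca : b * c * a = z := by
    have hcomm : z * a = a * z := hT.commute a ha
    rw [← habc] at hcomm ⊢
    simpa [mul_assoc] using hcomm
  obtain rfl : d = a := mul_left_cancel (hbcd.trans hbca.symm)
  have hconj : [b, c].prod⁻¹ * d * [b, c].prod = d := by
    rw [List.prod_pair, mul_assoc, inv_mul_eq_iff_eq_mul, hbca, ← mul_assoc, habc]
  have hmove : [d, b, c, d] ∼ₕ [b, c, d, d] := by
    have h := (HurwitzEquiv.cons_append_singleton d [b, c]).append_right [d]
    rwa [hconj] at h
  exact .of_equiv hmove (((OrbitHasPair.of_cons_cons d []).cons c).cons b)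

theorem orbitHasPair_two_inv_of_mul_mul_eq (hT : IsTetrahedral T z) (ha : a ∈ T) (hb : b ∈ T)
    (h : a * b * s = z) : OrbitHasPair [a, b, s⁻¹] := by
  have hconj : s * b * s⁻¹ = a := by
    have hs : s = (a * b)⁻¹ * z := by rw [← h]; group
    calc s * b * s⁻¹
      _ = (a * b)⁻¹ * (z * b) * z⁻¹ * (a * b) := by rw [hs]; group
      _ = (a * b)⁻¹ * (b * a * b) := by rw [(hT.commute b hb).eq]; group
      _ = a := by rw [← hT.braid a ha b hb]; group
  have hmove : [a, b, s⁻¹] ∼ₕ [a * s⁻¹ * a⁻¹, a, a] := by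
    calc [a, b, s⁻¹]
      _ ∼ₕ [a, s⁻¹, a] := by
        simpa [hconj] using (HurwitzEquiv.cons_cons b s⁻¹ []).cons a
      _ ∼ₕ [a * s⁻¹ * a⁻¹, a, a] := .cons_cons_conj a s⁻¹ [a]
  exact .of_equiv hmove ((OrbitHasPair.of_cons_cons a []).cons _)

theorem orbitHasPair_two_inv_or (hT : IsTetrahedral T z) (ha : a ∈ T) (hb : b ∈ T) (hs : s ∈ T) :
    OrbitHasPair [a, b, s⁻¹] ∨ ∃ x ∈ T, [a, b, s⁻¹] ∼ₕ [x, s, s⁻¹] := by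
  rcases eq_or_ne a b with rfl | hab
  · exact .inl (.of_cons_cons a _)
  rcases hT.exists_equiv_or_mul_mul_eq ha hb hs hab with ⟨x, hx, hequiv⟩ | h
  · exact .inr ⟨x, hx, hequiv.append_right [s⁻¹]⟩
  · exact .inl (hT.orbitHasPair_two_inv_of_mul_mul_eq ha hb h)

theorem orbitHasPair_three_inv (hT : IsTetrahedral T z) (ha : a ∈ T) (hb : b ∈ T) (hc : c ∈ T)
    (hs : s ∈ T) : OrbitHasPair [a, b, c, s⁻¹] := by
  rcases hT.orbitHasPair_two_inv_or hb hc hs with h | ⟨x, hx, hequiv⟩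
  · exact h.cons a
  refine .of_equiv (hequiv.cons a) ?_
  rcases hT.orbitHasPair_three_or ha hx hs with h | h
  · exact h.append_right [s⁻¹]
  · have hswap : [a, x, s, s⁻¹] ∼ₕ [a, x, s⁻¹, s] := by
      simpa using ((HurwitzEquiv.cons_cons s s⁻¹ []).cons x).cons a
    exact .of_equiv hswap ((hT.orbitHasPair_two_inv_of_mul_mul_eq ha hx h).append_right [s])

theorem orbitHasPair_inv_pair_inv_or (hT : IsTetrahedral T z) (ha : a ∈ T) (hs : s ∈ T)
    (ht : t ∈ T) : OrbitHasPair [a, s, s⁻¹, t⁻¹] ∨ a = t := by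
  rcases eq_or_ne s a with rfl | hsa
  · exact .inl (.of_cons_cons s _)
  rcases hT.eq_or_mul_mul_eq s hs a ha t ht hsa with rfl | rfl | rfl | h
  · exact .inl (((OrbitHasPair.of_cons_cons t⁻¹ []).cons t).cons a)
  · exact .inr rfl
  · refine .inl (.of_equiv ((HurwitzEquiv.cons_inv_pair_conj a s).append_right _) ?_)
    exact ((OrbitHasPair.of_cons_cons _ []).cons _).cons a
  · have hmove : [a, s, s⁻¹, t⁻¹] ∼ₕ [s⁻¹, s, a, t⁻¹] := by
      calc [a, s, s⁻¹, t⁻¹]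
        _ ∼ₕ [s, s⁻¹, a, t⁻¹] := by
          simpa using (HurwitzEquiv.cons_append_singleton a [s, s⁻¹]).append_right [t⁻¹]
        _ ∼ₕ [s⁻¹, s, a, t⁻¹] := by simpa using HurwitzEquiv.cons_cons s s⁻¹ [a, t⁻¹]
    exact .inl (.of_equiv hmove ((hT.orbitHasPair_two_inv_of_mul_mul_eq hs ha h).cons s⁻¹))

theorem orbitHasPair_two_inv_inv_or (hT : IsTetrahedral T z) (ha : a ∈ T) (hb : b ∈ T)
    (hs : s ∈ T) (ht : t ∈ T) :
    OrbitHasPair [a, b, s⁻¹, t⁻¹] ∨ [a, b, s⁻¹, t⁻¹].prod = 1 := by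
  rcases hT.orbitHasPair_two_inv_or ha hb hs with h | ⟨x, hx, hequiv⟩
  · exact .inl (h.append_right [t⁻¹])
  have hequiv' : [a, b, s⁻¹, t⁻¹] ∼ₕ [x, s, s⁻¹, t⁻¹] := hequiv.append_right [t⁻¹]
  refine (hT.orbitHasPair_inv_pair_inv_or hx hs ht).imp (.of_equiv hequiv') ?_
  rintro rfl
  simpa using hequiv'.prod_eq

theorem orbitHasPair_append_or (hT : IsTetrahedral T z) (l m : List G) (hl : ∀ x ∈ l, x ∈ T)
    (hm : ∀ x ∈ m, x⁻¹ ∈ T) (hle : m.length ≤ l.length) (hlen : 3 ≤ (l ++ m).length) :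
    OrbitHasPair (l ++ m) ∨ (l ++ m).prod = 1 ∨ (l ++ m).prod = z ∨ (l ++ m).prod ∈ T := by
  match l, m with
  | [], m | [_], m =>
    simp only [List.length_append, List.length_cons, List.length_nil] at hle hlen
    omega
  | [_, _], [] => simp at hlen
  | [_, _], _ :: _ :: _ :: _ => simp at hle
  | [a, b], [s] =>
    simp only [List.forall_mem_cons] at hl hm
    rcases hT.orbitHasPair_two_inv_or hl.1 hl.2.1 hm.1 with h | ⟨x, hx, hequiv⟩
    · exact .inl (by simpa using h)
    · have hprod : ([a, b] ++ [s]).prod = x := by simpa using hequiv.prod_eq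
      exact .inr (.inr (.inr (hprod ▸ hx)))
  | [a, b], [s, t] =>
    simp only [List.forall_mem_cons] at hl hm
    rcases hT.orbitHasPair_two_inv_inv_or hl.1 hl.2.1 hm.1 hm.2.1 with h | h
    · exact .inl (by simpa using h)
    · exact .inr (.inl (by simpa using h))
  | [a, b, c], [] =>
    simp only [List.forall_mem_cons] at hl
    rcases hT.orbitHasPair_three_or hl.1 hl.2.1 hl.2.2.1 with h | h
    · exact .inl h
    · exact .inr (.inr (.inl (by simpa [mul_assoc] using h)))
  | [a, b, c], s :: m =>
    simp only [List.forall_mem_cons] at hl hm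
    have h := hT.orbitHasPair_three_inv hl.1 hl.2.1 hl.2.2.1 hm.1
    exact .inl (by simpa using h.append_right m)
  | a :: b :: c :: d :: l, m =>
    simp only [List.forall_mem_cons] at hl
    exact .inl ((hT.orbitHasPair_four hl.1 hl.2.1 hl.2.2.1 hl.2.2.2.1).append_right (l ++ m))

theorem orbitHasPair_or (hT : IsTetrahedral T z) (l : List G)
    (hl : ∀ x ∈ l, x ∈ T ∨ x⁻¹ ∈ T) (hlen : 3 ≤ l.length) :
    OrbitHasPair l ∨ l.prod = 1 ∨ l.prod = z ∨ l.prod = z⁻¹ ∨ l.prod ∈ T ∨ l.prod⁻¹ ∈ T := by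
  obtain ⟨m, n, hm, hn, hequiv⟩ :=
    HurwitzEquiv.exists_append_of_conj_mem hT.inv.conj_mem l hl
  rcases le_total n.length m.length with hle | hle
  · have h := hT.orbitHasPair_append_or m n hm hn hle (hequiv.length_eq ▸ hlen)
    rw [← hequiv.prod_eq] at h
    exact h.imp (.of_equiv hequiv) (by tauto)
  · have hequiv' := hequiv.trans (HurwitzEquiv.append_comm m n)
    have hm' : ∀ x ∈ m.map (fun x => n.prod⁻¹ * x * n.prod), x⁻¹⁻¹ ∈ T := by
      simpa using fun x hx => hT.conj_mem n.prod x (hm x hx)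
    have h := hT.inv.orbitHasPair_append_or n _ hn hm' (by simpa using hle)
      (hequiv'.length_eq ▸ hlen)
    rw [← hequiv'.prod_eq] at h
    exact h.imp (.of_equiv hequiv') (by rw [Set.mem_ofPred_eq]; tauto)

end IsTetrahedral

end Hurwitz

section Matrices

local notation "Mat₂" => Matrix (Fin 2) (Fin 2)

theorem isPrimitiveRoot_ω : IsPrimitiveRoot ω 3 := by
  simpa [ω] using Complex.isPrimitiveRoot_exp 3 three_ne_zero

theorem ω_sq : ω ^ 2 = -1 - ω := by
  have h := isPrimitiveRoot_ω.geom_sum_eq_zero (by norm_num)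
  simp only [Finset.sum_range_succ, Finset.sum_range_zero, pow_zero, pow_one, zero_add] at h
  linear_combination h

theorem ω_ne_ω_sq : ω ≠ ω ^ 2 := by
  simpa using isPrimitiveRoot_ω.pow_inj (i := 1) (j := 2) (by norm_num) (by norm_num)

/-- The field `ℚ(ω)`, with `⟨x, y⟩` standing for `x + y * ω`. Unlike the corresponding subfield of
`ℂ`, it has decidable equality, so that identities between matrices over it can be decided. -/
abbrev QOmega : Type := QuadraticAlgebra ℚ (-1) (-1)

instance : Fact (∀ r : ℚ, r ^ 2 ≠ -1 + -1 * r) :=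
  ⟨fun r h => by nlinarith [sq_nonneg (2 * r + 1)]⟩

namespace QOmega

/-- The embedding of `ℚ(ω)` into `ℂ`. -/
def toComplex : QOmega →+* ℂ :=
  (QuadraticAlgebra.lift ⟨ω, by
    rw [neg_one_smul, neg_one_smul, ← sq, ω_sq, sub_eq_add_neg]⟩ : QOmega →ₐ[ℚ] ℂ)

theorem toComplex_mk (x y : ℚ) : toComplex ⟨x, y⟩ = x + y * ω := by
  simp [toComplex, QuadraticAlgebra.lift, Algebra.smul_def]

/-- The embedding of matrices over `ℚ(ω)` into complex matrices. -/
def matrixToComplex : Mat₂ QOmega →+* Mat₂ ℂ :=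
  toComplex.mapMatrix

theorem matrixToComplex_injective : Function.Injective matrixToComplex :=
  Matrix.map_injective toComplex.injective

theorem det_matrixToComplex (X : Mat₂ QOmega) :
    (matrixToComplex X).det = toComplex X.det :=
  (toComplex.map_det X).symm

end QOmega

open QOmega

/-- `AMat` with its entries in `ℚ(ω)`. -/
def AMatQ : Mat₂ QOmega := !![1, 0; 0, ⟨0, 1⟩]

/-- `BMat` with its entries in `ℚ(ω)`, reduced by `ω ^ 2 = -1 - ω`. -/
def BMatQ : Mat₂ QOmega :=
  !![⟨1 / 3, 2 / 3⟩, ⟨-1, -1⟩; ⟨2 / 3, 2 / 3⟩, ⟨2 / 3, 1 / 3⟩]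

theorem matrixToComplex_AMatQ : matrixToComplex AMatQ = AMat := by
  ext i j
  fin_cases i <;> fin_cases j <;> simp [matrixToComplex, AMatQ, AMat, toComplex_mk]

theorem matrixToComplex_BMatQ : matrixToComplex BMatQ = BMat := by
  ext i j
  fin_cases i <;> fin_cases j <;>
    simp [matrixToComplex, BMatQ, BMat, toComplex_mk, ω_sq] <;>
    ring

open scoped Pointwise in
/-- The 24 elements of `G4` over `ℚ(ω)`. The first two factors multiply to the normal quaternion
subgroup, of which the powers of `AMatQ` form a complement. -/
def g4Matrices : Finset (Mat₂ QOmega) :=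
  {1, -1} * {1, AMatQ * BMatQ ^ 2, BMatQ ^ 2 * AMatQ, AMatQ * BMatQ * AMatQ} *
    {1, AMatQ, AMatQ ^ 2}

/-- The four elements of `R1` over `ℚ(ω)`: the reflection `BMatQ` and its conjugates under the
powers of `AMatQ`, together with `AMatQ` itself. -/
def r1Matrices : Finset (Mat₂ QOmega) :=
  {AMatQ, BMatQ, AMatQ * BMatQ * AMatQ ^ 2, AMatQ ^ 2 * BMatQ * AMatQ}

theorem AMatQ_pow_three : AMatQ ^ 3 = 1 := by decide +kernel

theorem BMatQ_pow_three : BMatQ ^ 3 = 1 := by decide +kernel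

theorem AMatQ_mul_BMatQ_pow_three : (AMatQ * BMatQ) ^ 3 = -1 := by decide +kernel

theorem one_mem_g4Matrices : 1 ∈ g4Matrices := by decide +kernel

theorem AMatQ_mul_mem_g4Matrices : ∀ X ∈ g4Matrices, AMatQ * X ∈ g4Matrices := by decide +kernel

theorem BMatQ_mul_mem_g4Matrices : ∀ X ∈ g4Matrices, BMatQ * X ∈ g4Matrices := by decide +kernel

theorem mem_r1Matrices_or_det_eq :
    ∀ X ∈ g4Matrices, X ≠ 1 → (X - 1).det = 0 → X ∈ r1Matrices ∨ X.det = ⟨-1, -1⟩ := by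
  decide +kernel

theorem det_eq_of_mem_r1Matrices : ∀ X ∈ r1Matrices, X.det = ⟨0, 1⟩ := by decide +kernel

theorem braid_of_mem_r1Matrices :
    ∀ X ∈ r1Matrices, ∀ Y ∈ r1Matrices, X * Y * X = Y * X * Y := by
  decide +kernel

theorem eq_or_mul_mul_eq_of_mem_r1Matrices :
    ∀ X ∈ r1Matrices, ∀ Y ∈ r1Matrices, ∀ V ∈ r1Matrices, X ≠ Y →
      V = X ∨ V = Y ∨ Y * V = X * Y ∨ X * Y * V = -1 := by
  decide +kernel

theorem mat_one : mat 1 = 1 := rfl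

theorem mat_mul (x y : G4) : mat (x * y) = mat x * mat y := rfl

theorem mat_injective : Function.Injective mat :=
  Units.val_injective.comp Subtype.val_injective

theorem exists_mem_g4Matrices (x : G4) : ∃ X ∈ g4Matrices, matrixToComplex X = mat x := by
  obtain ⟨x, hx⟩ := x
  suffices ∃ X ∈ g4Matrices, matrixToComplex X = (x : Mat₂ ℂ) from this
  have generator_eq {g : GL (Fin 2) ℂ} (hg : (g : Mat₂ ℂ) = AMat ∨ (g : Mat₂ ℂ) = BMat) :
      ∃ Y : Mat₂ QOmega, matrixToComplex Y = g ∧ Y ^ 3 = 1 ∧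
        ∀ X ∈ g4Matrices, Y * X ∈ g4Matrices := by
    rcases hg with hg | hg
    · exact ⟨AMatQ, hg ▸ matrixToComplex_AMatQ, AMatQ_pow_three, AMatQ_mul_mem_g4Matrices⟩
    · exact ⟨BMatQ, hg ▸ matrixToComplex_BMatQ, BMatQ_pow_three, BMatQ_mul_mem_g4Matrices⟩
  induction hx using Subgroup.closure_induction_left with
  | one => exact ⟨1, one_mem_g4Matrices, map_one _⟩
  | mul_left g hg y _ ih =>
    obtain ⟨Y, hY, -, hmul⟩ := generator_eq hg
    obtain ⟨X, hX, hXy⟩ := ih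
    exact ⟨Y * X, hmul X hX, by simp [hY, hXy]⟩
  | inv_mul_cancel g hg y _ ih =>
    obtain ⟨Y, hY, hpow, hmul⟩ := generator_eq hg
    obtain ⟨X, hX, hXy⟩ := ih
    have hinv : g⁻¹ = g * g := by
      refine inv_eq_of_mul_eq_one_left (Units.ext ?_)
      simpa [pow_succ, hY] using congrArg matrixToComplex hpow
    exact ⟨Y * (Y * X), hmul _ (hmul X hX), by simp [hinv, hY, hXy, mul_assoc]⟩

theorem IsReflection.exists_mem_r1Matrices_or_det_eq {x : G4} (hx : IsReflection x) :
    (∃ X ∈ r1Matrices, matrixToComplex X = mat x) ∨ (mat x).det = ω ^ 2 := by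
  obtain ⟨X, hX, hXx⟩ := exists_mem_g4Matrices x
  have hX_ne : X ≠ 1 := by
    rintro rfl
    exact hx.1 (mat_injective (by rw [← hXx, map_one, mat_one]))
  have hX_det : (X - 1).det = 0 := by
    apply toComplex.injective
    rw [← det_matrixToComplex, map_sub, map_one, hXx, hx.2, map_zero]
  refine (mem_r1Matrices_or_det_eq X hX hX_ne hX_det).imp (fun h => ⟨X, h, hXx⟩) fun h => ?_
  rw [← hXx, det_matrixToComplex, h, toComplex_mk, ω_sq]
  push_cast
  ring

theorem IsReflection.mem_R1_or_mem_R2 {x : G4} (hx : IsReflection x) : x ∈ R1 ∨ x ∈ R2 := by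
  refine hx.exists_mem_r1Matrices_or_det_eq.imp ?_ (fun h => ⟨hx, h⟩)
  rintro ⟨X, hX, hXx⟩
  refine ⟨hx, ?_⟩
  rw [← hXx, det_matrixToComplex, det_eq_of_mem_r1Matrices X hX, toComplex_mk]
  simp

theorem exists_mem_r1Matrices {x : G4} (hx : x ∈ R1) :
    ∃ X ∈ r1Matrices, matrixToComplex X = mat x :=
  hx.1.exists_mem_r1Matrices_or_det_eq.resolve_right (hx.2 ▸ ω_ne_ω_sq)

theorem det_mat_inv (x : G4) : (mat x⁻¹).det = (mat x).det⁻¹ := by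
  refine eq_inv_of_mul_eq_one_left ?_
  rw [← Matrix.det_mul, ← mat_mul, inv_mul_cancel, mat_one, Matrix.det_one]

theorem IsReflection.inv {x : G4} (hx : IsReflection x) : IsReflection x⁻¹ := by
  refine ⟨inv_ne_one.2 hx.1, ?_⟩
  have h : mat x⁻¹ - 1 = -(mat x⁻¹ * (mat x - 1)) := by
    rw [mul_sub, mul_one, ← mat_mul, inv_mul_cancel, mat_one, neg_sub]
  rw [h, Matrix.det_neg, Matrix.det_mul, hx.2, mul_zero, mul_zero]

theorem inv_mem_R1_of_mem_R2 {x : G4} (hx : x ∈ R2) : x⁻¹ ∈ R1 := by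
  refine ⟨hx.1.inv, ?_⟩
  rw [det_mat_inv, hx.2]
  refine inv_eq_of_mul_eq_one_left ?_
  rw [← pow_succ', isPrimitiveRoot_ω.pow_eq_one]

theorem conj_mem_R1 (g : G4) {x : G4} (hx : x ∈ R1) : g⁻¹ * x * g ∈ R1 := by
  have hinv : mat g⁻¹ * mat g = 1 := by rw [← mat_mul, inv_mul_cancel, mat_one]
  refine ⟨⟨?_, ?_⟩, ?_⟩
  · simpa [mul_assoc, inv_mul_eq_one] using hx.1.1
  · have h : mat (g⁻¹ * x * g) - 1 = mat g⁻¹ * (mat x - 1) * mat g := by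
      rw [mul_sub, sub_mul, mul_one, hinv, mat_mul, mat_mul]
    rw [h, Matrix.det_mul, Matrix.det_mul, hx.1.2, mul_zero, zero_mul]
  · rw [mat_mul, mat_mul, Matrix.det_mul_right_comm, hinv, one_mul, hx.2]

theorem exists_mat_eq_neg_one : ∃ z : G4, mat z = -1 := by
  have hA : AMat ^ 3 = 1 := by
    rw [← matrixToComplex_AMatQ, ← map_pow, AMatQ_pow_three, map_one]
  have hB : BMat ^ 3 = 1 := by
    rw [← matrixToComplex_BMatQ, ← map_pow, BMatQ_pow_three, map_one]
  let A : G4 := ⟨.ofPowEqOne AMat 3 hA three_ne_zero, Subgroup.subset_closure (.inl rfl)⟩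
  let B : G4 := ⟨.ofPowEqOne BMat 3 hB three_ne_zero, Subgroup.subset_closure (.inr rfl)⟩
  refine ⟨(A * B) ^ 3, ?_⟩
  calc mat ((A * B) ^ 3)
    _ = (AMat * BMat) ^ 3 := rfl
    _ = -1 := by
      rw [← matrixToComplex_AMatQ, ← matrixToComplex_BMatQ, ← map_mul, ← map_pow,
        AMatQ_mul_BMatQ_pow_three, map_neg, map_one]

theorem isTetrahedral_R1 {z : G4} (hz : mat z = -1) : IsTetrahedral R1 z where
  conj_mem g _ ha := conj_mem_R1 g ha
  braid a ha b hb := by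
    obtain ⟨X, hX, hXa⟩ := exists_mem_r1Matrices ha
    obtain ⟨Y, hY, hYb⟩ := exists_mem_r1Matrices hb
    apply mat_injective
    simpa [mat_mul, hXa, hYb] using congrArg matrixToComplex (braid_of_mem_r1Matrices X hX Y hY)
  commute a _ := mat_injective (by simp [mat_mul, hz])
  eq_or_mul_mul_eq a ha b hb v hv hab := by
    obtain ⟨X, hX, hXa⟩ := exists_mem_r1Matrices ha
    obtain ⟨Y, hY, hYb⟩ := exists_mem_r1Matrices hb
    obtain ⟨V, hV, hVv⟩ := exists_mem_r1Matrices hv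
    have hXY : X ≠ Y := by
      rintro rfl
      exact hab (mat_injective (hXa.symm.trans hYb))
    have h := eq_or_mul_mul_eq_of_mem_r1Matrices X hX Y hY V hV hXY
    simpa only [← matrixToComplex_injective.eq_iff, map_mul, map_neg, map_one, hXa, hYb, hVv,
      ← hz, ← mat_mul, mat_injective.eq_iff, mul_assoc, eq_inv_mul_iff_mul_eq] using h

end Matrices

theorem det_sub_smul_one_of_det_sub_one_eq_zero {R : Type*} [CommRing R]
    {X : Matrix (Fin 2) (Fin 2) R} (hX : (X - 1).det = 0) (r : R) :
    (X - r • (1 : Matrix (Fin 2) (Fin 2) R)).det = (1 - r) * (X.det - r) := by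
  simp only [Matrix.det_fin_two, Matrix.sub_apply, Matrix.smul_apply, Matrix.one_apply_eq,
    Matrix.one_apply_ne (zero_ne_one (α := Fin 2)), Matrix.one_apply_ne (one_ne_zero (α := Fin 2)),
    smul_eq_mul] at hX ⊢
  linear_combination r * hX

theorem IsReflection.det_pow_three {x : G4} (hx : IsReflection x) : (mat x).det ^ 3 = 1 := by
  rcases hx.mem_R1_or_mem_R2 with h | h
  · rw [h.2, isPrimitiveRoot_ω.pow_eq_one]
  · rw [h.2, pow_right_comm, isPrimitiveRoot_ω.pow_eq_one, one_pow]

theorem IsCoxeter.not_isReflection {c : G4} (hc : IsCoxeter c) : ¬ IsReflection c := by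
  intro hrefl
  obtain ⟨ζ, hζ, hdet⟩ := hc
  rw [det_sub_smul_one_of_det_sub_one_eq_zero hrefl.2, mul_eq_zero, sub_eq_zero,
    sub_eq_zero] at hdet
  have hζ3 : ζ ^ 3 = 1 := by
    rcases hdet with rfl | rfl
    · exact one_pow 3
    · exact hrefl.det_pow_three
  exact hζ.pow_ne_one_of_pos_of_lt three_ne_zero (by norm_num) hζ3

theorem IsCoxeter.sq_ne_one {c : G4} (hc : IsCoxeter c) : c ^ 2 ≠ 1 := by
  intro hsq
  obtain ⟨ζ, hζ, hdet⟩ := hc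
  have hfactor : (mat c - ζ • 1) * (mat c + ζ • 1) = (1 - ζ ^ 2) • 1 := by
    have hmat : mat c * mat c = 1 := by rw [← mat_mul, ← sq, hsq, mat_one]
    simp [sub_mul, mul_add, hmat, smul_sub, smul_smul, sub_smul, sq]
  have hζ2 : (1 - ζ ^ 2) ^ 2 = 0 := by
    simpa [Matrix.det_mul, hdet, Matrix.det_smul] using (congrArg Matrix.det hfactor).symm
  refine hζ.pow_ne_one_of_pos_of_lt two_ne_zero (by norm_num) ?_
  exact (sub_eq_zero.1 (pow_eq_zero_iff two_ne_zero |>.1 hζ2)).symm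

theorem g4_pair_lemma_general (k : ℕ) (hk : 3 ≤ k) (c : G4) (hsq : c ^ 2 ≠ 1)
    (hrefl : ¬ IsReflection c) (t : Fin k → G4) (ht : ∀ i, IsReflection (t i))
    (hp : (List.ofFn t).prod = c) :
    ∃ s : Fin k → G4, SameHurwitzOrbit t s ∧ HasConsecutiveEqualPair s := by
  obtain ⟨z, hz⟩ := exists_mat_eq_neg_one
  have hz_sq : z ^ 2 = 1 := mat_injective (by rw [sq, mat_mul, hz, neg_mul_neg, one_mul, mat_one])
  have hmem : ∀ x ∈ List.ofFn t, x ∈ R1 ∨ x⁻¹ ∈ R1 :=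
    List.forall_mem_ofFn_iff.2 fun i => (ht i).mem_R1_or_mem_R2.imp_right inv_mem_R1_of_mem_R2
  rcases (isTetrahedral_R1 hz).orbitHasPair_or _ hmem (by simpa using hk)
    with h | h | h | h | h | h
  · exact h.exists_sameHurwitzOrbit
  all_goals rw [hp] at h
  · exact absurd (by rw [h, one_pow]) hsq
  · exact absurd (by rw [h, hz_sq]) hsq
  · exact absurd (by rw [h, inv_pow, hz_sq, inv_one]) hsq
  · exact absurd h.1 hrefl
  · exact absurd (by simpa using h.1.inv) hrefl

theorem g4_pair_lemma (k : ℕ) (hk : 3 ≤ k) (c : G4) (hc : IsCoxeter c)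
    (t : Fin k → G4) (ht : ∀ i, IsReflection (t i)) (hp : (List.ofFn t).prod = c) :
    ∃ s : Fin k → G4, SameHurwitzOrbit t s ∧ HasConsecutiveEqualPair s :=
  g4_pair_lemma_general k hk c hc.sq_ne_one hc.not_isReflection t ht hp
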